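/- Let V be a finite set, let Ã : V×V → ℝ be symmetric with Ã(k,k') = Ã(k',k) ≥ 0 and Ã(k,k) = 0, let λ > 0, let ‖·‖ be a norm on ℝ^d with dual norm ‖·‖_*, and for each k ∈ V let F_k : ℝ^d → ℝ be convex and differentiable. If w̃ : V → ℝ^d is a global minimizer of the objective w ↦ Σ_{k∈V} F_k(w_k) + λ Σ_{{k,k'}} Ã(k,k') ‖w_k − w_{k'}‖ (the second sum running over unordered pairs of distinct elements of V, each pair counted once), then for every node k ∈ V: ‖∇F_k(w̃_k)‖_* ≤ λ Σ_{k'∈V, k'≠k} Ã(k,k'). -/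

import Mathlib

/-- If `w̃` is a global minimizer of the GTV objective
`w ↦ Σ_k F_k(w_k) + λ Σ_{unordered pairs {k,k'}} Ã(k,k') ‖w_k − w_{k'}‖` (the sum over
unordered pairs, each counted once, is encoded as half the symmetric double sum),
then for every node `k` the dual norm of the gradient satisfies
`‖∇F_k(w̃_k)‖_* ≤ λ Σ_{k'≠k} Ã(k,k')`. -/
theorem gtv_minimizer_gradient_bound
    {d : ℕ} {V : Type*} [Fintype V] [DecidableEq V]
    (At : V → V → ℝ)
    (hAsym : ∀ k k', At k k' = At k' k)
    (hAnonneg : ∀ k k', 0 ≤ At k k')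
    (hAdiag : ∀ k, At k k = 0)
    (lam : ℝ) (hlam : 0 < lam)
    (nrm : EuclideanSpace ℝ (Fin d) → ℝ)
    (hnrm_zero : ∀ x, nrm x = 0 ↔ x = 0)
    (hnrm_smul : ∀ (a : ℝ) (x : EuclideanSpace ℝ (Fin d)), nrm (a • x) = |a| * nrm x)
    (hnrm_add : ∀ x y, nrm (x + y) ≤ nrm x + nrm y)
    (dnrm : EuclideanSpace ℝ (Fin d) → ℝ)
    (hdnrm : ∀ x, dnrm x = sSup {t : ℝ | ∃ z, nrm z ≤ 1 ∧ t = (inner ℝ x z : ℝ)})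
    (F : V → EuclideanSpace ℝ (Fin d) → ℝ)
    (hFconv : ∀ k, ConvexOn ℝ Set.univ (F k))
    (hFdiff : ∀ k, Differentiable ℝ (F k))
    (wt : V → EuclideanSpace ℝ (Fin d))
    (hmin : ∀ w : V → EuclideanSpace ℝ (Fin d),
      (∑ k, F k (wt k)) + lam * ((1 / 2) * ∑ k, ∑ k', At k k' * nrm (wt k - wt k'))
        ≤ (∑ k, F k (w k)) + lam * ((1 / 2) * ∑ k, ∑ k', At k k' * nrm (w k - w k'))) :
    ∀ k, dnrm (gradient (F k) (wt k)) ≤ lam * ∑ k' ∈ Finset.univ.erase k, At k k' := by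
  intro k
  have hS : ∑ k' ∈ Finset.univ.erase k, At k k' = ∑ k', At k k' := by
    rw [← Finset.add_sum_erase Finset.univ (At k) (Finset.mem_univ k), hAdiag, zero_add]
  rw [hS, hdnrm]
  apply csSup_le
  · exact ⟨_, 0, by rw [(hnrm_zero 0).2 rfl]; norm_num, rfl⟩
  rintro _ ⟨z, hz, rfl⟩
  have key : ∀ t : ℝ, 0 < t →
      F k (wt k) ≤ F k (wt k + t • (-z)) + t * (lam * ∑ k', At k k') := by
    intro t ht
    have h := hmin (Function.update wt k (wt k + t • (-z)))
    set w := Function.update wt k (wt k + t • (-z)) with hw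
    have hwk : w k = wt k + t • (-z) := by simp [hw]
    have hwn : ∀ j, j ≠ k → w j = wt j := fun j hj => by simp [hw, hj]
    have h1 : ∑ j, F j (w j) - ∑ j, F j (wt j) = F k (wt k + t • (-z)) - F k (wt k) := by
      rw [← Finset.sum_sub_distrib, Finset.sum_eq_single k]
      · rw [hwk]
      · intro j _ hj
        rw [hwn j hj, sub_self]
      · simp
    have hn1 : nrm (t • (-z)) ≤ t := by
      rw [smul_neg, ← neg_smul, hnrm_smul, abs_neg, abs_of_pos ht]
      nlinarith
    have hn2 : nrm (t • z) ≤ t := by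
      rw [hnrm_smul, abs_of_pos ht]
      nlinarith
    have hp : ∀ i j, At i j * nrm (w i - w j) ≤ At i j * nrm (wt i - wt j)
        + t * ((if i = k then At k j else 0) + (if j = k then At k i else 0)) := by
      intro i j
      have hA := hAnonneg i j
      by_cases hi : i = k <;> by_cases hj : j = k
      · subst hi; subst hj
        simp [hAdiag]
      · subst hi
        have : w i - w j = (wt i - wt j) + t • (-z) := by rw [hwk, hwn j hj]; abel
        have h3 := hnrm_add (wt i - wt j) (t • (-z))
        rw [← this] at h3
        simp only [if_true, hj, if_false, add_zero]
        nlinarith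
      · subst hj
        have : w i - w j = (wt i - wt j) + t • z := by
          rw [hwk, hwn i hi, smul_neg]; abel
        have h3 := hnrm_add (wt i - wt j) (t • z)
        rw [← this] at h3
        simp only [if_true, hi, if_false, zero_add]
        rw [hAsym j i]
        nlinarith
      · simp [hi, hj, hwn i hi, hwn j hj]
    have hs : ∑ i, ∑ j, At i j * nrm (w i - w j) ≤
        ∑ i, ∑ j, At i j * nrm (wt i - wt j) + t * (2 * ∑ j, At k j) := by
      refine (Finset.sum_le_sum fun i _ => Finset.sum_le_sum fun j _ => hp i j).trans
        (le_of_eq ?_)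
      simp only [Finset.sum_add_distrib, ← Finset.mul_sum]
      congr 2
      rw [Finset.sum_comm]
      simp
      ring
    have := mul_le_mul_of_nonneg_left hs hlam.le
    linarith
  have hd : HasDerivAt (fun t : ℝ => F k (wt k + t • (-z)))
      (inner ℝ (gradient (F k) (wt k)) (-z)) 0 := by
    have hg := (hFdiff k (wt k)).hasGradientAt.hasFDerivAt
    have hl : HasDerivAt (fun t : ℝ => wt k + t • (-z)) (-z) 0 := by
      simpa using ((hasDerivAt_id (0 : ℝ)).smul_const (-z)).const_add (wt k)
    have hg' : HasFDerivAt (F k) (InnerProductSpace.toDual ℝ _ (gradient (F k) (wt k)))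
        (wt k + (0 : ℝ) • (-z)) := by simpa using hg
    exact hg'.comp_hasDerivAt (0 : ℝ) hl
  have hlim := hd.tendsto_slope_zero_right
  have := ge_of_tendsto (b := -(lam * ∑ k', At k k')) hlim (by
    filter_upwards [self_mem_nhdsWithin] with t ht
    have ht' : 0 < t := ht
    have h := key t ht'
    simp only [zero_add, zero_smul, add_zero, smul_eq_mul]
    rw [inv_mul_eq_div, le_div_iff₀ ht']
    linarith)
  rw [inner_neg_right] at this
  linarith
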